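/- For every real q with 0 < q < 1, Π_{n=0}^{∞} (1 + √3 · q^{2n+1} + q^{4n+2}) / (1 − √3 · q^{2n+1} + q^{4n+2}) = ( −φ(−q⁴) + 3φ(−q³⁶) + 2√3 · q · f(−q²⁴) ) / ( −φ(−q⁴) + 3φ(−q³⁶) − 2√3 · q · f(−q²⁴) ), the denominator on the right-hand side being nonzero. -/

import Mathlib

/-- Ramanujan's theta function `φ(q) = ∑_{n ∈ ℤ} q^{n²}`. -/
noncomputable def phi (q : ℝ) : ℝ := ∑' n : ℤ, q ^ (n ^ 2)

/-- Ramanujan's function `f(-q) = ∏_{m=1}^∞ (1 - q^m)`, as a function of `q`. -/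
noncomputable def fneg (q : ℝ) : ℝ := ∏' m : ℕ, (1 - q ^ (m + 1))

/-!
Let `ζ` be a primitive twelfth root of unity, so that `s = ζ + ζ⁻¹` satisfies `s² = 3`. By the
Jacobi triple product, `f(-q²) ∏ (1 + s q^{2n+1} + q^{4n+2}) = ∑ q^{n²} ζⁿ`. Split this theta series
according to `n` modulo `6`: since `ζ⁶ = -1`, the classes `n ≡ ±1` contribute `s` times
`∑ (-1)ᵏ q^{(6k+1)²}`, which is `q f(-q²⁴)` by the pentagonal number theorem, while the even classes
contribute `(-φ(-q⁴) + 3φ(-q³⁶)) / 2` and the class `n ≡ 3` cancels. Taking `s = √3` and `s = -√3`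
and dividing gives the identity.

The triple product is the limit of MacMahon's finite version, the expansion of
`∏_{k<N} (1 + z⁻¹ q^{2k+1}) ∏_{k<N} (1 + z q^{2k+1})` with Gaussian binomial coefficients.
-/

open Filter Topology

section QPochhammer

/-- The `q`-Pochhammer symbol `(x; x)_n = (1 - x)(1 - x²)⋯(1 - xⁿ)`, from which the coefficients of
the finite triple product are built. -/
def qPochhammer {R : Type*} [CommRing R] (x : R) (n : ℕ) : R :=
  ∏ k ∈ Finset.range n, (1 - x ^ (k + 1))

/-- The reciprocal `1 / (x; x)_m`, for every integer `m`; it vanishes for `m < 0`, which is the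
value that keeps the recurrence `invQPochhammer_eq_mul_add_one` valid on all of `ℤ`. -/
def invQPochhammer {K : Type*} [Field K] (x : K) (m : ℤ) : K :=
  if 0 ≤ m then (qPochhammer x m.toNat)⁻¹ else 0

lemma qPochhammer_succ {R : Type*} [CommRing R] (x : R) (n : ℕ) :
    qPochhammer x (n + 1) = qPochhammer x n * (1 - x ^ (n + 1)) :=
  Finset.prod_range_succ _ _

variable {K : Type*} [Field K]

@[simp]
lemma invQPochhammer_natCast (x : K) (n : ℕ) : invQPochhammer x n = (qPochhammer x n)⁻¹ := by
  simp [invQPochhammer]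

lemma invQPochhammer_of_neg (x : K) {m : ℤ} (hm : m < 0) : invQPochhammer x m = 0 :=
  if_neg hm.not_ge

lemma invQPochhammer_eq_mul_add_one {x : K} (hx : ∀ n : ℕ, 1 - x ^ (n + 1) ≠ 0) (m : ℤ) :
    invQPochhammer x m = (1 - x ^ (m + 1)) * invQPochhammer x (m + 1) := by
  obtain hm | rfl | hm := lt_trichotomy m (-1)
  · rw [invQPochhammer_of_neg x (by lia), invQPochhammer_of_neg x (by lia), mul_zero]
  · simp [invQPochhammer_of_neg]
  · lift m to ℕ using by lia
    have hcast : (m : ℤ) + 1 = (m + 1 : ℕ) := by push_cast; rfl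
    rw [hcast, zpow_natCast, invQPochhammer_natCast, invQPochhammer_natCast, qPochhammer_succ,
      mul_inv_rev, mul_inv_cancel_left₀ (hx m)]

end QPochhammer

section FiniteTripleProduct

variable {K : Type*} [Field K]

/-- The coefficient of `z^j` in `∏_{k<M} (1 + z⁻¹ q^{2k+1}) ∏_{k<N} (1 + z q^{2k+1})`, namely the
Gaussian binomial `[M+N choose M+j]` to the base `q²`, times `q^{j²}`. It vanishes unless
`-M ≤ j ≤ N`. -/
def tripleProductCoeff (q : K) (M N : ℕ) (j : ℤ) : K :=
  qPochhammer (q ^ 2) (M + N) * invQPochhammer (q ^ 2) (M + j) * invQPochhammer (q ^ 2) (N - j) *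
    q ^ (j ^ 2)

lemma tripleProductCoeff_neg (q : K) (M N : ℕ) (j : ℤ) :
    tripleProductCoeff q M N (-j) = tripleProductCoeff q N M j := by
  simp only [tripleProductCoeff, neg_sq, sub_neg_eq_add, ← sub_eq_add_neg, add_comm M N]
  ring

lemma tripleProductCoeff_zero_zero (q : K) (j : ℤ) :
    tripleProductCoeff q 0 0 j = if j = 0 then 1 else 0 := by
  obtain hj | rfl | hj := lt_trichotomy j 0
  · simp [tripleProductCoeff, invQPochhammer_of_neg _ hj, hj.ne]
  · simp [tripleProductCoeff, invQPochhammer, qPochhammer]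
  · simp [tripleProductCoeff, invQPochhammer_of_neg _ (neg_neg_of_pos hj), hj.ne']

lemma tripleProductCoeff_succ_right {q : K} (hq : q ≠ 0) (hq' : ∀ n : ℕ, 1 - (q ^ 2) ^ (n + 1) ≠ 0)
    (M N : ℕ) (j : ℤ) :
    tripleProductCoeff q M (N + 1) j =
      tripleProductCoeff q M N j + q ^ (2 * N + 1) * tripleProductCoeff q M N (j - 1) := by
  have hleft : invQPochhammer (q ^ 2) (N - j) =
      (1 - (q ^ 2) ^ (N + 1 - j)) * invQPochhammer (q ^ 2) (N + 1 - j) := by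
    rw [invQPochhammer_eq_mul_add_one hq', sub_add_eq_add_sub]
  have hright : invQPochhammer (q ^ 2) (M + (j - 1)) =
      (1 - (q ^ 2) ^ (M + j)) * invQPochhammer (q ^ 2) (M + j) := by
    rw [invQPochhammer_eq_mul_add_one hq', add_assoc, sub_add_cancel]
  have hsquare : q ^ (2 * N + 1) * q ^ ((j - 1) ^ 2) = (q ^ 2) ^ (N + 1 - j) * q ^ (j ^ 2) := by
    rw [← zpow_natCast, ← zpow_natCast q 2, ← zpow_mul, ← zpow_add₀ hq, ← zpow_add₀ hq]
    congr 1
    push_cast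
    ring
  have hpascal : (q ^ 2) ^ (N + 1 - j) * (q ^ 2) ^ (M + j) = (q ^ 2) ^ (M + N + 1) := by
    rw [← zpow_natCast _ (M + N + 1), ← zpow_add₀ (pow_ne_zero 2 hq)]
    congr 1
    push_cast
    ring
  simp only [tripleProductCoeff, ← add_assoc, qPochhammer_succ, Nat.cast_succ, hleft, hright,
    sub_sub_eq_add_sub]
  generalize qPochhammer (q ^ 2) (M + N) = P
  generalize invQPochhammer (q ^ 2) (M + j) = u
  generalize invQPochhammer (q ^ 2) (N + 1 - j) = v
  linear_combination (P * u * v * q ^ (j ^ 2)) * hpascal -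
    (P * u * v * (1 - (q ^ 2) ^ (M + j))) * hsquare

variable [TopologicalSpace K]

lemma hasSum_tripleProductCoeff_swap {q z S : K} {M N : ℕ}
    (h : HasSum (fun j : ℤ ↦ tripleProductCoeff q M N j * z ^ j) S) :
    HasSum (fun j : ℤ ↦ tripleProductCoeff q N M j * z⁻¹ ^ j) S := by
  simpa [Function.comp_def, tripleProductCoeff_neg] using (Equiv.neg ℤ).hasSum_iff.2 h

variable [IsTopologicalSemiring K]

lemma hasSum_tripleProductCoeff_succ_right {q z S : K} (hq : q ≠ 0)
    (hq' : ∀ n : ℕ, 1 - (q ^ 2) ^ (n + 1) ≠ 0) (hz : z ≠ 0) {M N : ℕ}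
    (h : HasSum (fun j : ℤ ↦ tripleProductCoeff q M N j * z ^ j) S) :
    HasSum (fun j : ℤ ↦ tripleProductCoeff q M (N + 1) j * z ^ j)
      (S * (1 + z * q ^ (2 * N + 1))) := by
  have hshift := ((Equiv.subRight (1 : ℤ)).hasSum_iff.2 h).mul_left (z * q ^ (2 * N + 1))
  convert h.add hshift using 1
  · ext j
    simp only [Function.comp_apply, Equiv.subRight_apply, tripleProductCoeff_succ_right hq hq',
      zpow_sub_one₀ hz]
    field_simp
  · ring

theorem hasSum_tripleProductCoeff {q : K} (hq : q ≠ 0) (hq' : ∀ n : ℕ, 1 - (q ^ 2) ^ (n + 1) ≠ 0)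
    {z : K} (hz : z ≠ 0) (M N : ℕ) :
    HasSum (fun j : ℤ ↦ tripleProductCoeff q M N j * z ^ j)
      ((∏ k ∈ Finset.range M, (1 + z⁻¹ * q ^ (2 * k + 1))) *
        ∏ k ∈ Finset.range N, (1 + z * q ^ (2 * k + 1))) := by
  induction M with
  | zero =>
    induction N with
    | zero =>
      have hzero (j : ℤ) : (if j = 0 then 1 else 0) = tripleProductCoeff q 0 0 j * z ^ j := by
        obtain rfl | hj := eq_or_ne j 0 <;> simp [tripleProductCoeff_zero_zero, *]
      simpa [hzero] using hasSum_ite_eq (0 : ℤ) (1 : K)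
    | succ N ih =>
      rw [Finset.prod_range_succ _ N, ← mul_assoc]
      exact hasSum_tripleProductCoeff_succ_right hq hq' hz ih
  | succ M ih =>
    rw [Finset.prod_range_succ _ M, mul_right_comm]
    simpa using hasSum_tripleProductCoeff_swap <|
      hasSum_tripleProductCoeff_succ_right hq hq' (inv_ne_zero hz) <|
        hasSum_tripleProductCoeff_swap ih

end FiniteTripleProduct

section TripleProduct

variable {𝕜 : Type*} [NormedField 𝕜]

lemma norm_pow_lt_one {x : 𝕜} (hx : ‖x‖ < 1) {n : ℕ} (hn : n ≠ 0) : ‖x ^ n‖ < 1 :=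
  norm_pow x n ▸ pow_lt_one₀ (norm_nonneg x) hx hn

lemma one_sub_pow_succ_ne_zero {x : 𝕜} (hx : ‖x‖ < 1) (n : ℕ) : 1 - x ^ (n + 1) ≠ 0 := by
  refine sub_ne_zero.2 fun h ↦ (norm_pow_lt_one hx n.succ_ne_zero).ne ?_
  rw [← h, norm_one]

lemma summable_norm_mul_pow_mul_add {q : 𝕜} (hq : ‖q‖ < 1) (z : 𝕜) {a : ℕ} (ha : a ≠ 0) (b : ℕ) :
    Summable fun n : ℕ ↦ ‖z * q ^ (a * n + b)‖ := by
  have hgeom := summable_geometric_of_lt_one (by positivity) (pow_lt_one₀ (norm_nonneg q) hq ha)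
  refine (hgeom.mul_left (‖z‖ * ‖q‖ ^ b)).congr fun n ↦ ?_
  rw [norm_mul, norm_pow, pow_add, pow_mul]
  ring

lemma summable_pow_sq_mul_pow {r : ℝ} (hr0 : 0 ≤ r) (hr1 : r < 1) (t : ℝ) :
    Summable fun n : ℕ ↦ r ^ (n ^ 2) * t ^ n := by
  have hlim : Tendsto (fun n : ℕ ↦ r ^ n * t) atTop (𝓝 0) := by
    simpa using (tendsto_pow_atTop_nhds_zero_of_lt_one hr0 hr1).mul_const t
  have hsmall : ∀ᶠ n : ℕ in atTop, |r ^ n * t| ≤ 1 / 2 := by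
    filter_upwards [hlim.norm.eventually_le_const (by norm_num : ‖(0 : ℝ)‖ < 1 / 2)] with n hn
      using hn
  refine Summable.of_norm_bounded_eventually_nat summable_geometric_two ?_
  filter_upwards [hsmall] with n hn
  rw [sq, pow_mul, ← mul_pow, norm_pow]
  exact pow_le_pow_left₀ (norm_nonneg _) hn n

lemma summable_norm_zpow_sq_mul_zpow {q : 𝕜} (hq : ‖q‖ < 1) (z : 𝕜) :
    Summable fun j : ℤ ↦ ‖q ^ (j ^ 2) * z ^ j‖ := by
  have hnat (w : 𝕜) : Summable fun n : ℕ ↦ ‖q ^ ((n : ℤ) ^ 2) * w ^ n‖ := by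
    refine (summable_pow_sq_mul_pow (norm_nonneg q) hq ‖w‖).congr fun n ↦ ?_
    rw [norm_mul, norm_pow w, ← Nat.cast_pow, zpow_natCast, norm_pow q]
  exact .of_nat_of_neg (by simpa using hnat z) (by simpa using hnat z⁻¹)

lemma summable_norm_neg_pow_succ {x : 𝕜} (hx : ‖x‖ < 1) :
    Summable fun n : ℕ ↦ ‖-x ^ (n + 1)‖ := by
  simpa using summable_norm_mul_pow_mul_add hx (-1) one_ne_zero 1

variable [CompleteSpace 𝕜]

lemma multipliable_one_add_mul_pow_odd {q : 𝕜} (hq : ‖q‖ < 1) (z : 𝕜) :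
    Multipliable fun n : ℕ ↦ 1 + z * q ^ (2 * n + 1) :=
  multipliable_one_add_of_summable (summable_norm_mul_pow_mul_add hq z two_ne_zero 1)

lemma multipliable_one_sub_pow_succ {x : 𝕜} (hx : ‖x‖ < 1) :
    Multipliable fun n : ℕ ↦ 1 - x ^ (n + 1) := by
  simpa only [sub_eq_add_neg] using
    multipliable_one_add_of_summable (f := fun n ↦ -x ^ (n + 1)) (summable_norm_neg_pow_succ hx)

lemma tprod_one_sub_pow_succ_ne_zero {x : 𝕜} (hx : ‖x‖ < 1) :
    ∏' n : ℕ, (1 - x ^ (n + 1)) ≠ 0 := by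
  have hne (n : ℕ) : 1 + -x ^ (n + 1) ≠ 0 := by
    simpa only [sub_eq_add_neg] using one_sub_pow_succ_ne_zero hx n
  simpa only [sub_eq_add_neg] using
    tprod_one_add_ne_zero_of_summable (f := fun n ↦ -x ^ (n + 1)) hne
      (summable_norm_neg_pow_succ hx)

lemma tendsto_qPochhammer {x : 𝕜} (hx : ‖x‖ < 1) :
    Tendsto (qPochhammer x) atTop (𝓝 (∏' n : ℕ, (1 - x ^ (n + 1)))) :=
  (multipliable_one_sub_pow_succ hx).tendsto_prod_tprod_nat

lemma tendsto_invQPochhammer {x : 𝕜} (hx : ‖x‖ < 1) :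
    Tendsto (invQPochhammer x) atTop (𝓝 (∏' n : ℕ, (1 - x ^ (n + 1)))⁻¹) := by
  have htoNat : Tendsto Int.toNat atTop atTop :=
    tendsto_atTop.2 fun b ↦ (eventually_ge_atTop (b : ℤ)).mono fun m hm ↦ by lia
  refine (((tendsto_qPochhammer hx).comp htoNat).inv₀
    (tprod_one_sub_pow_succ_ne_zero hx)).congr' ?_
  filter_upwards [eventually_ge_atTop 0] with m hm
  exact (if_pos hm).symm

lemma exists_norm_tripleProductCoeff_le {q : 𝕜} (hq : ‖q ^ 2‖ < 1) :
    ∃ C : ℝ, ∀ (N : ℕ) (j : ℤ), ‖tripleProductCoeff q N N j‖ ≤ C * ‖q ^ (j ^ 2)‖ := by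
  obtain ⟨A, hA⟩ := (tendsto_qPochhammer hq).norm.bddAbove_range
  obtain ⟨B, hB⟩ :=
    ((tendsto_qPochhammer hq).inv₀ (tprod_one_sub_pow_succ_ne_zero hq)).norm.bddAbove_range
  have hqP (n : ℕ) : ‖qPochhammer (q ^ 2) n‖ ≤ A := hA ⟨n, rfl⟩
  have hA0 : 0 ≤ A := (norm_nonneg _).trans (hqP 0)
  have hB0 : 0 ≤ B := (norm_nonneg _).trans (hB ⟨0, rfl⟩)
  have hinv (m : ℤ) : ‖invQPochhammer (q ^ 2) m‖ ≤ B := by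
    obtain hm | hm := lt_or_ge m 0
    · simpa [invQPochhammer_of_neg _ hm] using hB0
    · lift m to ℕ using hm
      simpa using hB ⟨m, rfl⟩
  refine ⟨A * B * B, fun N j ↦ ?_⟩
  rw [tripleProductCoeff, norm_mul, norm_mul, norm_mul]
  gcongr
  exacts [hqP _, hinv _, hinv _]

lemma tendsto_tripleProductCoeff {q : 𝕜} (hq : ‖q ^ 2‖ < 1) (j : ℤ) :
    Tendsto (fun N : ℕ ↦ tripleProductCoeff q N N j) atTop
      (𝓝 ((∏' n : ℕ, (1 - (q ^ 2) ^ (n + 1)))⁻¹ * q ^ (j ^ 2))) := by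
  have hne := tprod_one_sub_pow_succ_ne_zero hq
  have hqP : Tendsto (fun N : ℕ ↦ qPochhammer (q ^ 2) (N + N)) atTop _ :=
    (tendsto_qPochhammer hq).comp (tendsto_atTop_mono (fun N ↦ N.le_add_left N) tendsto_id)
  have hinv (i : ℤ) : Tendsto (fun N : ℕ ↦ invQPochhammer (q ^ 2) (N + i)) atTop _ :=
    (tendsto_invQPochhammer hq).comp
      (tendsto_atTop_add_const_right _ i tendsto_natCast_atTop_atTop)
  have hlim := ((hqP.mul (hinv j)).mul (hinv (-j))).mul_const (q ^ (j ^ 2))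
  rw [mul_inv_cancel₀ hne, one_mul] at hlim
  simpa only [tripleProductCoeff, sub_eq_add_neg] using hlim

theorem jacobi_triple_product {q z : 𝕜} (hq : ‖q‖ < 1) (hz : z ≠ 0) :
    ∑' j : ℤ, q ^ (j ^ 2) * z ^ j =
      (∏' n : ℕ, (1 - (q ^ 2) ^ (n + 1))) *
        ((∏' n : ℕ, (1 + z⁻¹ * q ^ (2 * n + 1))) * ∏' n : ℕ, (1 + z * q ^ (2 * n + 1))) := by
  obtain rfl | hq0 := eq_or_ne q 0
  · rw [tsum_eq_single 0 fun j hj ↦ by simp [zero_zpow _ (pow_ne_zero 2 hj)]]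
    simp
  have hq2 : ‖q ^ 2‖ < 1 := norm_pow_lt_one hq two_ne_zero
  obtain ⟨C, hC⟩ := exists_norm_tripleProductCoeff_le hq2
  have htannery : Tendsto (fun N : ℕ ↦ ∑' j : ℤ, tripleProductCoeff q N N j * z ^ j) atTop
      (𝓝 (∑' j : ℤ, (∏' n : ℕ, (1 - (q ^ 2) ^ (n + 1)))⁻¹ * q ^ (j ^ 2) * z ^ j)) := by
    refine tendsto_tsum_of_dominated_convergence
      ((summable_norm_zpow_sq_mul_zpow hq z).mul_left C)
      (fun j ↦ (tendsto_tripleProductCoeff hq2 j).mul_const _) (.of_forall fun N j ↦ ?_)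
    rw [norm_mul, norm_mul, ← mul_assoc]
    exact mul_le_mul_of_nonneg_right (hC N j) (norm_nonneg _)
  have hprod := (multipliable_one_add_mul_pow_odd hq z⁻¹).tendsto_prod_tprod_nat.mul
    (multipliable_one_add_mul_pow_odd hq z).tendsto_prod_tprod_nat
  have hlim := tendsto_nhds_unique htannery <| hprod.congr fun N ↦
    (hasSum_tripleProductCoeff hq0 (one_sub_pow_succ_ne_zero hq2) hz N N).tsum_eq.symm
  simp only [mul_assoc, tsum_mul_left] at hlim
  rw [← hlim, mul_inv_cancel_left₀ (tprod_one_sub_pow_succ_ne_zero hq2)]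

end TripleProduct

section Pentagonal

lemma hasProd_prod_fin {α : Type*} [CommMonoid α] [TopologicalSpace α] [ContinuousMul α]
    [RegularSpace α] {f : ℕ → α} {a : α} (h : HasProd f a) (k : ℕ) [NeZero k] :
    HasProd (fun n : ℕ ↦ ∏ i : Fin k, f (n * k + i)) a :=
  ((Nat.divModEquiv k).symm.hasProd_iff.2 h).prod_fiberwise fun _ ↦ hasProd_fintype _

variable {𝕜 : Type*} [NormedField 𝕜] [CompleteSpace 𝕜]

-- The triple product with base `y³` at `z = -y`: its three factors run through the residue classes
-- modulo `3` of the exponents of `y²`.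
theorem pentagonal_number_theorem {y : 𝕜} (hy0 : y ≠ 0) (hy : ‖y‖ < 1) :
    ∏' n : ℕ, (1 - (y ^ 2) ^ (n + 1)) = ∑' k : ℤ, (-1) ^ k * y ^ (3 * k ^ 2 + k) := by
  have hy2 : ‖y ^ 2‖ < 1 := norm_pow_lt_one hy two_ne_zero
  have hy3 : ‖y ^ 3‖ < 1 := norm_pow_lt_one hy three_ne_zero
  have hy6 : ‖(y ^ 3) ^ 2‖ < 1 := norm_pow_lt_one hy3 two_ne_zero
  have hfactors (n : ℕ) : ∏ i : Fin 3, (1 - (y ^ 2) ^ (n * 3 + i + 1)) =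
      (1 - ((y ^ 3) ^ 2) ^ (n + 1)) *
        ((1 + (-y)⁻¹ * (y ^ 3) ^ (2 * n + 1)) * (1 + -y * (y ^ 3) ^ (2 * n + 1))) := by
    rw [Fin.prod_univ_three]
    simp only [Fin.val_zero, Fin.val_one, Fin.val_two]
    field_simp
    ring
  calc
    _ = ∏' n : ℕ, ∏ i : Fin 3, (1 - (y ^ 2) ^ (n * 3 + i + 1)) :=
      (hasProd_prod_fin (multipliable_one_sub_pow_succ hy2).hasProd 3).tprod_eq.symm
    _ = ∑' k : ℤ, (y ^ 3) ^ (k ^ 2) * (-y) ^ k := by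
      rw [jacobi_triple_product hy3 (neg_ne_zero.2 hy0), tprod_congr hfactors,
        Multipliable.tprod_mul (multipliable_one_sub_pow_succ hy6)
          ((multipliable_one_add_mul_pow_odd hy3 _).mul (multipliable_one_add_mul_pow_odd hy3 _)),
        Multipliable.tprod_mul (multipliable_one_add_mul_pow_odd hy3 _)
          (multipliable_one_add_mul_pow_odd hy3 _)]
    _ = _ := tsum_congr fun k ↦ by
      rw [neg_eq_neg_one_mul, mul_zpow, zpow_add₀ hy0, zpow_mul y 3, zpow_ofNat]
      ring

end Pentagonal

section AlternatingTheta

lemma tsum_int_eq_sum_fin_tsum {α : Type*} [AddCommGroup α] [UniformSpace α] [IsUniformAddGroup α]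
    [CompleteSpace α] [T2Space α] {f : ℤ → α} (hf : Summable f) (m : ℕ) [NeZero m] :
    ∑' n : ℤ, f n = ∑ r : Fin m, ∑' k : ℤ, f (k * m + r) := by
  let e : Fin m × ℤ ≃ ℤ := (Equiv.prodComm _ _).trans (Int.divModEquiv m).symm
  calc
    ∑' n : ℤ, f n = ∑' p : Fin m × ℤ, f (e p) := (e.tsum_eq f).symm
    _ = ∑' r : Fin m, ∑' k : ℤ, f (e (r, k)) := (e.summable_iff.2 hf).tsum_prod
    _ = ∑ r : Fin m, ∑' k : ℤ, f (k * m + r) := tsum_fintype _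

variable {𝕜 : Type*} [NormedField 𝕜]

/-- The theta series `∑_{k ∈ ℤ} (-1)ᵏ q^{(ak + r)²}`. These are the parts into which
`∑_{n ∈ ℤ} q^{n²} ζⁿ` with `ζᵃ = -1` splits according to the residue `r` of `n` modulo `a`. -/
noncomputable def alternatingTheta (q : 𝕜) (a r : ℤ) : 𝕜 :=
  ∑' k : ℤ, (-1) ^ k * q ^ ((a * k + r) ^ 2)

lemma alternatingTheta_sub (q : 𝕜) (a r : ℤ) :
    alternatingTheta q a (a - r) = -alternatingTheta q a r := by
  rw [alternatingTheta, alternatingTheta, ← (Equiv.subLeft (-1 : ℤ)).tsum_eq, ← tsum_neg]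
  refine tsum_congr fun k ↦ ?_
  have hsign : (-1 : 𝕜) ^ (-1 - k) = -(-1) ^ k := by
    rw [zpow_sub₀ (neg_ne_zero.2 one_ne_zero), div_eq_mul_inv, ← inv_zpow]
    simp
  rw [Equiv.subLeft_apply, hsign, neg_mul]
  congr 3
  ring

lemma alternatingTheta_two_mul_self [NeZero (2 : 𝕜)] (q : 𝕜) (r : ℤ) :
    alternatingTheta q (2 * r) r = 0 := by
  have h := alternatingTheta_sub q (2 * r) r
  rw [two_mul, add_sub_cancel_right, ← two_mul, eq_neg_iff_add_eq_zero, ← two_mul] at h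
  exact (mul_eq_zero.1 h).resolve_left two_ne_zero

lemma alternatingTheta_pow_sq (q : 𝕜) (b : ℕ) (a r : ℤ) :
    alternatingTheta (q ^ (b ^ 2)) a r = alternatingTheta q (b * a) (b * r) := by
  refine tsum_congr fun k ↦ ?_
  rw [← zpow_natCast, ← zpow_mul]
  congr 2
  push_cast
  ring

variable [CompleteSpace 𝕜]

theorem tsum_zpow_sq_mul_zpow_eq_sum_alternatingTheta {q ζ : 𝕜} (hq : ‖q‖ < 1) {m : ℕ} [NeZero m]
    (hζ : ζ ^ m = -1) :
    ∑' n : ℤ, q ^ (n ^ 2) * ζ ^ n = ∑ r ∈ Finset.range m, ζ ^ r * alternatingTheta q m r := by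
  have hζ0 : ζ ≠ 0 := by
    rintro rfl
    simp [zero_pow (NeZero.ne m)] at hζ
  rw [tsum_int_eq_sum_fin_tsum (summable_norm_zpow_sq_mul_zpow hq ζ).of_norm m,
    Finset.sum_range]
  refine Finset.sum_congr rfl fun r _ ↦ ?_
  rw [alternatingTheta, ← tsum_mul_left]
  refine tsum_congr fun k ↦ ?_
  rw [zpow_add₀ hζ0, mul_comm k, zpow_mul, zpow_natCast, zpow_natCast, hζ]
  ring

lemma alternatingTheta_one_zero {q : 𝕜} (hq : ‖q‖ < 1) :
    alternatingTheta q 1 0 = alternatingTheta q 3 0 - 2 * alternatingTheta q 3 1 := by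
  have hdissect := tsum_zpow_sq_mul_zpow_eq_sum_alternatingTheta hq (m := 3) (ζ := -1) (by norm_num)
  have hreflect : alternatingTheta q 3 2 = -alternatingTheta q 3 1 := alternatingTheta_sub q 3 1
  simp only [Finset.sum_range_succ, Finset.sum_range_zero, Nat.cast_ofNat, Nat.cast_zero,
    Nat.cast_one, hreflect] at hdissect
  calc
    alternatingTheta q 1 0 = ∑' n : ℤ, q ^ (n ^ 2) * (-1) ^ n :=
      tsum_congr fun n ↦ by rw [one_mul, add_zero, mul_comm]
    _ = _ := by rw [hdissect]; ring

lemma tsum_zpow_sq_mul_zpow_of_primitive_twelfth [NeZero (2 : 𝕜)] {q ζ : 𝕜} (hq : ‖q‖ < 1)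
    (hζ : ζ ^ 4 - ζ ^ 2 + 1 = 0) :
    ∑' n : ℤ, q ^ (n ^ 2) * ζ ^ n =
      alternatingTheta q 6 0 + (ζ + ζ⁻¹) * alternatingTheta q 6 1 + alternatingTheta q 6 2 := by
  have hζ6 : ζ ^ 6 = -1 := by linear_combination (ζ ^ 2 + 1) * hζ
  have hinv : ζ⁻¹ = -ζ ^ 5 := inv_eq_of_mul_eq_one_right (by linear_combination -hζ6)
  have h3 : alternatingTheta q 6 3 = 0 := alternatingTheta_two_mul_self q 3
  have h4 : alternatingTheta q 6 4 = -alternatingTheta q 6 2 := alternatingTheta_sub q 6 2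
  have h5 : alternatingTheta q 6 5 = -alternatingTheta q 6 1 := alternatingTheta_sub q 6 1
  rw [tsum_zpow_sq_mul_zpow_eq_sum_alternatingTheta hq hζ6]
  simp only [Finset.sum_range_succ, Finset.sum_range_zero, Nat.cast_ofNat, Nat.cast_zero,
    Nat.cast_one, h3, h4, h5, hinv]
  linear_combination -alternatingTheta q 6 2 * hζ

lemma alternatingTheta_six_one {q : 𝕜} (hq : ‖q‖ < 1) :
    alternatingTheta q 6 1 = q * ∏' n : ℕ, (1 - (q ^ 24) ^ (n + 1)) := by
  obtain rfl | hq0 := eq_or_ne q 0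
  · have hterm (k : ℤ) : (0 : 𝕜) ^ ((6 * k + 1) ^ 2) = 0 := zero_zpow _ (pow_ne_zero 2 (by lia))
    simp [alternatingTheta, hterm]
  have hq12 : ‖q ^ 12‖ < 1 := norm_pow_lt_one hq (by norm_num)
  rw [show q ^ 24 = (q ^ 12) ^ 2 by ring, pentagonal_number_theorem (pow_ne_zero 12 hq0) hq12,
    ← tsum_mul_left]
  refine tsum_congr fun k ↦ ?_
  have hsquare : (6 * k + 1) ^ 2 = 1 + (12 : ℕ) * (3 * k ^ 2 + k) := by push_cast; ring
  rw [hsquare, zpow_add₀ hq0, zpow_one, zpow_mul, zpow_natCast]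
  ring

end AlternatingTheta

section QuadraticFactors

variable {𝕜 : Type*} [NormedField 𝕜]

lemma summable_norm_mul_pow_odd_add_pow {q : 𝕜} (hq : ‖q‖ < 1) (s : 𝕜) :
    Summable fun n : ℕ ↦ ‖s * q ^ (2 * n + 1) + q ^ (4 * n + 2)‖ := by
  have hlin := summable_norm_mul_pow_mul_add hq s two_ne_zero 1
  have hquad := summable_norm_mul_pow_mul_add hq 1 four_ne_zero 2
  simp only [one_mul] at hquad
  exact .of_nonneg_of_le (fun _ ↦ norm_nonneg _) (fun _ ↦ norm_add_le _ _) (hlin.add hquad)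

variable [CompleteSpace 𝕜]

lemma multipliable_one_add_mul_pow_odd_add_pow {q : 𝕜} (hq : ‖q‖ < 1) (s : 𝕜) :
    Multipliable fun n : ℕ ↦ 1 + s * q ^ (2 * n + 1) + q ^ (4 * n + 2) := by
  simpa only [add_assoc] using
    multipliable_one_add_of_summable (summable_norm_mul_pow_odd_add_pow hq s)

lemma tprod_one_add_mul_pow_odd_add_pow_ne_zero {q s : ℝ} (hq : |q| < 1) (hs : s ^ 2 < 4) :
    ∏' n : ℕ, (1 + s * q ^ (2 * n + 1) + q ^ (4 * n + 2)) ≠ 0 := by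
  have hpos (t : ℝ) : 0 < 1 + (s * t + t ^ 2) := by nlinarith [sq_nonneg (2 * t + s)]
  have hne (n : ℕ) : 1 + (s * q ^ (2 * n + 1) + q ^ (4 * n + 2)) ≠ 0 := by
    convert (hpos (q ^ (2 * n + 1))).ne' using 3
    ring
  simpa only [add_assoc] using
    tprod_one_add_ne_zero_of_summable hne (summable_norm_mul_pow_odd_add_pow hq s)

theorem tsum_zpow_sq_mul_zpow_eq_mul_tprod {q z : 𝕜} (hq : ‖q‖ < 1) (hz : z ≠ 0) :
    ∑' n : ℤ, q ^ (n ^ 2) * z ^ n =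
      (∏' n : ℕ, (1 - (q ^ 2) ^ (n + 1))) *
        ∏' n : ℕ, (1 + (z + z⁻¹) * q ^ (2 * n + 1) + q ^ (4 * n + 2)) := by
  rw [jacobi_triple_product hq hz, ← Multipliable.tprod_mul
    (multipliable_one_add_mul_pow_odd hq z⁻¹) (multipliable_one_add_mul_pow_odd hq z)]
  congr 1
  refine tprod_congr fun n ↦ ?_
  field_simp
  ring

end QuadraticFactors

section RealEvaluation

lemma phi_neg (x : ℝ) : phi (-x) = alternatingTheta x 1 0 := by
  refine tsum_congr fun n ↦ ?_
  have hsign : (-1 : ℝ) ^ (n ^ 2) = (-1) ^ n := by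
    simp [neg_one_zpow_eq_ite, Int.even_pow]
  rw [neg_eq_neg_one_mul, mul_zpow, hsign, one_mul, add_zero]

lemma phi_neg_pow_four {q : ℝ} (hq : |q| < 1) :
    phi (-(q ^ 4)) = alternatingTheta q 6 0 - 2 * alternatingTheta q 6 2 := by
  have hq4 : ‖q ^ 4‖ < 1 := norm_pow_lt_one hq four_ne_zero
  rw [phi_neg, alternatingTheta_one_zero hq4]
  congr 1
  · exact alternatingTheta_pow_sq q 2 3 0
  · exact congr_arg (2 * ·) (alternatingTheta_pow_sq q 2 3 1)

lemma phi_neg_pow_thirtySix (q : ℝ) : phi (-(q ^ 36)) = alternatingTheta q 6 0 :=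
  (phi_neg _).trans (alternatingTheta_pow_sq q 6 1 0)

lemma ofReal_alternatingTheta (q : ℝ) (a r : ℤ) :
    ((alternatingTheta q a r : ℝ) : ℂ) = alternatingTheta (q : ℂ) a r := by
  simp [alternatingTheta, Complex.ofReal_tsum]

lemma ofReal_tprod {f : ℕ → ℝ} (hf : Multipliable f) : ((∏' n, f n : ℝ) : ℂ) = ∏' n, (f n : ℂ) :=
  hf.map_tprod Complex.ofRealHom Complex.continuous_ofReal

lemma exists_add_inv_eq {K : Type*} [Field K] [IsAlgClosed K] [NeZero (2 : K)] (s : K) :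
    ∃ ζ : K, ζ ≠ 0 ∧ ζ + ζ⁻¹ = s := by
  obtain ⟨w, hw⟩ := IsAlgClosed.exists_eq_mul_self (s ^ 2 - 4)
  have h2 : (2 : K) ≠ 0 := two_ne_zero
  have hmul : (s + w) / 2 * ((s - w) / 2) = 1 := by
    field_simp
    linear_combination hw
  refine ⟨(s + w) / 2, left_ne_zero_of_mul_eq_one hmul, ?_⟩
  rw [inv_eq_of_mul_eq_one_right hmul, ← add_div, add_add_sub_cancel, add_self_div_two]

theorem alternatingTheta_six_eq_fneg_mul_tprod {q s : ℝ} (hq : |q| < 1) (hs : s ^ 2 = 3) :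
    alternatingTheta q 6 0 + s * alternatingTheta q 6 1 + alternatingTheta q 6 2 =
      fneg (q ^ 2) * ∏' n : ℕ, (1 + s * q ^ (2 * n + 1) + q ^ (4 * n + 2)) := by
  have hqC : ‖(q : ℂ)‖ < 1 := by simpa using hq
  have hq2 : ‖q ^ 2‖ < 1 := norm_pow_lt_one hq two_ne_zero
  obtain ⟨ζ, hζ0, hζs⟩ := exists_add_inv_eq (s : ℂ)
  have hζ : ζ ^ 4 - ζ ^ 2 + 1 = 0 := by
    have hsC : (s : ℂ) ^ 2 = 3 := by exact_mod_cast hs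
    rw [← hζs] at hsC
    field_simp at hsC
    linear_combination hsC
  have hC := (tsum_zpow_sq_mul_zpow_of_primitive_twelfth hqC hζ).symm.trans
    (tsum_zpow_sq_mul_zpow_eq_mul_tprod hqC hζ0)
  rw [hζs] at hC
  apply Complex.ofReal_injective
  simpa [ofReal_alternatingTheta, fneg, ofReal_tprod (multipliable_one_sub_pow_succ hq2),
    ofReal_tprod (multipliable_one_add_mul_pow_odd_add_pow hq s)] using hC

theorem phi_add_fneg_eq_two_mul_fneg_mul_tprod {q s : ℝ} (hq : |q| < 1) (hs : s ^ 2 = 3) :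
    -phi (-(q ^ 4)) + 3 * phi (-(q ^ 36)) + 2 * s * q * fneg (q ^ 24) =
      2 * fneg (q ^ 2) * ∏' n : ℕ, (1 + s * q ^ (2 * n + 1) + q ^ (4 * n + 2)) := by
  have hodd : alternatingTheta q 6 1 = q * fneg (q ^ 24) := alternatingTheta_six_one hq
  have heval := alternatingTheta_six_eq_fneg_mul_tprod hq hs
  rw [hodd] at heval
  rw [phi_neg_pow_four hq, phi_neg_pow_thirtySix]
  linear_combination 2 * heval

theorem F61_product_identity_general (q : ℝ) (hq : |q| < 1) :
    (-phi (-(q ^ 4)) + 3 * phi (-(q ^ 36)) - 2 * Real.sqrt 3 * q * fneg (q ^ 24)) ≠ 0 ∧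
    (∏' n : ℕ, (1 + Real.sqrt 3 * q ^ (2 * n + 1) + q ^ (4 * n + 2))
        / (1 - Real.sqrt 3 * q ^ (2 * n + 1) + q ^ (4 * n + 2)))
      = (-phi (-(q ^ 4)) + 3 * phi (-(q ^ 36)) + 2 * Real.sqrt 3 * q * fneg (q ^ 24))
        / (-phi (-(q ^ 4)) + 3 * phi (-(q ^ 36)) - 2 * Real.sqrt 3 * q * fneg (q ^ 24)) := by
  have hs : √3 ^ 2 = 3 := Real.sq_sqrt (by norm_num)
  have hs' : (-√3) ^ 2 = 3 := by rw [neg_sq, hs]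
  have hfneg : 2 * fneg (q ^ 2) ≠ 0 := mul_ne_zero two_ne_zero <|
    tprod_one_sub_pow_succ_ne_zero (norm_pow_lt_one hq two_ne_zero)
  have hnum := phi_add_fneg_eq_two_mul_fneg_mul_tprod hq hs
  have hden := phi_add_fneg_eq_two_mul_fneg_mul_tprod hq hs'
  have hmul := multipliable_one_add_mul_pow_odd_add_pow hq √3
  have hmul' := multipliable_one_add_mul_pow_odd_add_pow hq (-√3)
  have hne' := tprod_one_add_mul_pow_odd_add_pow_ne_zero hq (s := -√3) (by norm_num [hs'])
  simp only [mul_neg, neg_mul, ← sub_eq_add_neg] at hden hmul' hne'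
  rw [hnum, hden, hmul.tprod_div₀ hmul' hne', mul_div_mul_left _ _ hfneg]
  exact ⟨mul_ne_zero hfneg hne', rfl⟩

end RealEvaluation

/-- For every real `0 < q < 1`,
`∏_{n=0}^∞ (1 + √3 q^{2n+1} + q^{4n+2})/(1 - √3 q^{2n+1} + q^{4n+2})
  = (-φ(-q⁴) + 3φ(-q³⁶) + 2√3 q f(-q²⁴))/(-φ(-q⁴) + 3φ(-q³⁶) - 2√3 q f(-q²⁴))`,
the denominator on the right-hand side being nonzero. -/
theorem F61_product_identity (q : ℝ) (hq0 : 0 < q) (hq1 : q < 1) :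
    (-phi (-(q ^ 4)) + 3 * phi (-(q ^ 36)) - 2 * Real.sqrt 3 * q * fneg (q ^ 24)) ≠ 0 ∧
    (∏' n : ℕ, (1 + Real.sqrt 3 * q ^ (2 * n + 1) + q ^ (4 * n + 2))
        / (1 - Real.sqrt 3 * q ^ (2 * n + 1) + q ^ (4 * n + 2)))
      = (-phi (-(q ^ 4)) + 3 * phi (-(q ^ 36)) + 2 * Real.sqrt 3 * q * fneg (q ^ 24))
        / (-phi (-(q ^ 4)) + 3 * phi (-(q ^ 36)) - 2 * Real.sqrt 3 * q * fneg (q ^ 24)) := by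
  exact F61_product_identity_general q (abs_lt.2 ⟨by linarith, hq1⟩)
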